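/- Assume μ = 0 and let q ∈ (0,∞) (so θ_q = 0 < φ*). Then Φ_q(a) − Φ_q(a + 1) > 0 for every a ∈ ℕ₀, and for all a ∈ ℕ₀, x ∈ ℕ₀ with x ≤ a, and f ∈ ℕ with f > a + 1 − x: f + Φ_q(x + f)/(Φ_q(a) − Φ_q(a + 1)) ≥ a + 1 − x + Φ_q(a + 1)/(Φ_q(a) − Φ_q(a + 1)). -/

import Mathlib

open MeasureTheory Filter Set

/-- The probability generating function of the offspring distribution `p`. -/
noncomputable def ptilde (p : ℕ → ℝ) (z : ℝ) : ℝ := ∑' k, p k * z ^ k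

/-- The p.g.f. of the immigration/culling mechanism: `rneg` is `r_{-1}`,
`r k` for `k ≥ 1` are the immigration probabilities (we require `r 0 = 0`). -/
noncomputable def rtilde (rneg : ℝ) (r : ℕ → ℝ) (z : ℝ) : ℝ :=
  rneg / z + ∑' k, r k * z ^ k

/-- `f : ℕ → ℝ` is `q`-harmonic for the branching process with branching mechanism `p`
(rate `lam`) and immigration/culling mechanism `(rneg, r)` (rate `mu`). -/
def IsQHarmonic (lam mu q : ℝ) (p : ℕ → ℝ) (rneg : ℝ) (r : ℕ → ℝ) (f : ℕ → ℝ) : Prop :=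
  ∀ x : ℕ, 1 ≤ x →
    (q + lam * x + mu) * f x
      = lam * x * (∑' k, p k * f (x + k - 1))
        + mu * (rneg * f (x - 1) + ∑' k, r k * f (x + k))

/-- The harmonic function `Φ_q`; `φ` is the smallest fixed point of `ptilde p` in `(0,1]`
and `θ` is the delimiter `θ_q`. -/
noncomputable def Phi (lam mu : ℝ) (p : ℕ → ℝ) (rneg : ℝ) (r : ℕ → ℝ)
    (φ θ q : ℝ) (x : ℕ) : ℝ :=
  q * ∫ v in (0:ℝ)..φ,
      Real.exp (-∫ w in θ..v,
          (q + mu * (1 - rtilde rneg r w)) / (lam * |ptilde p w - w|))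
        / (lam * |ptilde p v - v|) * v ^ x

/-- The harmonic function `Ψ_q`. -/
noncomputable def Psi (lam mu : ℝ) (p : ℕ → ℝ) (rneg : ℝ) (r : ℕ → ℝ)
    (φ q : ℝ) (x : ℕ) : ℝ :=
  1 - q * ∫ v in φ..(1:ℝ),
      Real.exp (-∫ w in v..(1:ℝ),
          (q + mu * (1 - rtilde rneg r w)) / (lam * |ptilde p w - w|))
        / (lam * |ptilde p v - v|) * v ^ x

/-- Condition (E'): `∫_v^1 dz/(z - ptilde p z) < ∞` for some `v ∈ (φ, 1)`. -/
def CondE (p : ℕ → ℝ) (φ : ℝ) : Prop :=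
  ∃ v, φ < v ∧ v < 1 ∧
    IntervalIntegrable (fun z => 1 / (z - ptilde p z)) MeasureTheory.volume v 1

/-!
Without immigration, `Φ_q(n) = ∫_0^φ g(v) v ^ n dv`, where `g = γ exp (-∫_0^· γ)` is the
probability density with hazard rate `γ = q / ρ`. It is the derivative of the bounded function
`-exp (-∫_0^· γ)`, hence integrable up to `φ`, although `γ` blows up there. Since `φ ≤ 1`, the
first differences `Φ_q(n) - Φ_q(n + 1) = ∫ g(v) v ^ n (1 - v) dv` are positive and decreasing
in `n`. Thus `Φ_q` is a convex sequence, and the claim says that it lies above its secant line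
through `a` and `a + 1`.
-/

theorem add_mul_sub_succ_le_of_antitone_sub_succ {R : Type*} [Ring R] [PartialOrder R]
    [IsOrderedAddMonoid R] {F : ℕ → R} (hF : Antitone fun k => F k - F (k + 1)) (a n : ℕ) :
    F (a + 1) + ((a + 1 : ℕ) : R) * (F a - F (a + 1)) ≤ F n + (n : R) * (F a - F (a + 1)) := by
  set D := F a - F (a + 1)
  have step (k : ℕ) : F (k + 1) + ((k + 1 : ℕ) : R) * D
      = F k + (k : R) * D + (D - (F k - F (k + 1))) := by
    push_cast
    noncomm_ring
  rcases le_total n (a + 1) with hn | hn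
  · have hanti : AntitoneOn (fun k : ℕ => F k + (k : R) * D) (Iic (a + 1)) := by
      refine antitoneOn_of_add_one_le ordConnected_Iic fun k _ _ hk => ?_
      rw [step]
      exact add_le_of_nonpos_right (sub_nonpos.2 (hF (Nat.le_of_succ_le_succ hk)))
    exact hanti hn self_mem_Iic hn
  · have hmono : MonotoneOn (fun k : ℕ => F k + (k : R) * D) (Ici (a + 1)) := by
      refine monotoneOn_of_le_add_one ordConnected_Ici fun k _ hk _ => ?_
      rw [step]
      exact le_add_of_nonneg_right (sub_nonneg.2 (hF (Nat.le_of_succ_le hk)))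
    exact hmono self_mem_Ici hn hn

theorem add_div_sub_succ_le_of_antitone_sub_succ {K : Type*} [Field K] [LinearOrder K]
    [IsStrictOrderedRing K] {F : ℕ → K} (hF : Antitone fun k => F k - F (k + 1)) {a : ℕ}
    (ha : 0 < F a - F (a + 1)) (n : ℕ) :
    (a : K) + 1 + F (a + 1) / (F a - F (a + 1)) ≤ n + F n / (F a - F (a + 1)) := by
  have h := div_le_div_of_nonneg_right (add_mul_sub_succ_le_of_antitone_sub_succ hF a n) ha.le
  rw [add_div, add_div, mul_div_cancel_right₀ _ ha.ne', mul_div_cancel_right₀ _ ha.ne'] at h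
  push_cast at h
  linarith

/-- The `n`-th moment of the density `g` on `[0, b]`. -/
noncomputable def densityMoment (g : ℝ → ℝ) (b : ℝ) (n : ℕ) : ℝ :=
  ∫ v in (0 : ℝ)..b, g v * v ^ n

section Moments

variable {g : ℝ → ℝ} {b : ℝ}

theorem intervalIntegrable_mul_pow_mul_one_sub (hg : IntervalIntegrable g volume 0 b) (n : ℕ) :
    IntervalIntegrable (fun v => g v * (v ^ n * (1 - v))) volume 0 b :=
  hg.mul_continuousOn (by fun_prop)

theorem densityMoment_sub_succ (hg : IntervalIntegrable g volume 0 b) (n : ℕ) :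
    densityMoment g b n - densityMoment g b (n + 1)
      = ∫ v in (0 : ℝ)..b, g v * (v ^ n * (1 - v)) := by
  have hpow (k : ℕ) : IntervalIntegrable (fun v => g v * v ^ k) volume 0 b :=
    hg.mul_continuousOn (by fun_prop)
  rw [densityMoment, densityMoment, ← intervalIntegral.integral_sub (hpow n) (hpow (n + 1))]
  congr with v
  ring

theorem densityMoment_sub_succ_pos (hg : IntervalIntegrable g volume 0 b) (hb0 : 0 < b)
    (hb1 : b ≤ 1) (hpos : ∀ v ∈ Ioo 0 b, 0 < g v) (n : ℕ) :
    0 < densityMoment g b n - densityMoment g b (n + 1) := by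
  rw [densityMoment_sub_succ hg]
  refine intervalIntegral.intervalIntegral_pos_of_pos_on
    (intervalIntegrable_mul_pow_mul_one_sub hg n) (fun v hv => ?_) hb0
  have hv1 : 0 < 1 - v := sub_pos.2 (hv.2.trans_le hb1)
  exact mul_pos (hpos v hv) (mul_pos (pow_pos hv.1 n) hv1)

theorem antitone_densityMoment_sub_succ (hg : IntervalIntegrable g volume 0 b) (hb0 : 0 ≤ b)
    (hb1 : b ≤ 1) (hnonneg : ∀ v ∈ Ioo 0 b, 0 ≤ g v) :
    Antitone fun n => densityMoment g b n - densityMoment g b (n + 1) := by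
  intro m n hmn
  simp only [densityMoment_sub_succ hg]
  refine intervalIntegral.integral_mono_on_of_le_Ioo hb0
    (intervalIntegrable_mul_pow_mul_one_sub hg n)
    (intervalIntegrable_mul_pow_mul_one_sub hg m) fun v hv => ?_
  have hv1 : v ≤ 1 := hv.2.le.trans hb1
  have hpow : v ^ n ≤ v ^ m := pow_le_pow_of_le_one hv.1.le hv1 hmn
  exact mul_le_mul_of_nonneg_left (mul_le_mul_of_nonneg_right hpow (sub_nonneg.2 hv1))
    (hnonneg v hv)

end Moments

theorem intervalIntegrable_of_hasDerivAt_of_abs_le {G g : ℝ → ℝ} {a b C : ℝ} (hab : a ≤ b)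
    (hderiv : ∀ x ∈ Ioo a b, HasDerivAt G (g x) x) (hnonneg : ∀ x ∈ Ioo a b, 0 ≤ g x)
    (hbound : ∀ x ∈ Ioo a b, |G x| ≤ C) :
    IntervalIntegrable g volume a b := by
  rcases hab.eq_or_lt with rfl | hlt
  · exact IntervalIntegrable.refl
  have hC : 0 ≤ C := by
    obtain ⟨x, hx⟩ := nonempty_Ioo.2 hlt
    exact (abs_nonneg _).trans (hbound x hx)
  have hG : MonotoneOn G (Ioo a b) := by
    refine monotoneOn_of_deriv_nonneg (convex_Ioo a b)
      (fun x hx => (hderiv x hx).continuousAt.continuousWithinAt) ?_ ?_ <;> rw [interior_Ioo]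
    · exact fun x hx => (hderiv x hx).differentiableAt.differentiableWithinAt
    · exact fun x hx => (hderiv x hx).deriv ▸ hnonneg x hx
  -- The bounds on `G` allow a monotone extension to `[a, b]`, whose derivative is integrable.
  let Gext : ℝ → ℝ := fun x => if x ≤ a then -C else if x < b then G x else C
  have hGext : Monotone Gext := by
    intro x y hxy
    have hx := fun h => abs_le.1 (hbound x h)
    have hy := fun h => abs_le.1 (hbound y h)
    have hGxy := fun h h' => hG (a := x) (b := y) h h' hxy
    simp only [mem_Ioo] at hx hy hGxy
    simp only [Gext]
    grind
  refine (hGext.monotoneOn _).intervalIntegrable_deriv.congr_uIoo fun x hx => ?_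
  rw [uIoo_of_le hab] at hx
  have hGext_eq : Gext =ᶠ[nhds x] G := by
    filter_upwards [Ioo_mem_nhds hx.1 hx.2] with y hy
    simp only [Gext, if_neg hy.1.not_ge, if_pos hy.2]
  rw [hGext_eq.deriv_eq, (hderiv x hx).deriv]

/-- The (possibly defective) density of a lifetime that starts at `a` and has hazard rate `γ`. -/
noncomputable def hazardDensity (γ : ℝ → ℝ) (a v : ℝ) : ℝ :=
  γ v * Real.exp (-∫ w in a..v, γ w)

section Hazard

variable {γ : ℝ → ℝ} {a b : ℝ}

theorem hasDerivAt_neg_exp_neg_integral (hγ : ContinuousOn γ (Ico a b)) {v : ℝ}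
    (hv : v ∈ Ioo a b) :
    HasDerivAt (fun u => -Real.exp (-∫ w in a..u, γ w)) (hazardDensity γ a v) v := by
  have hint : IntervalIntegrable γ volume a v :=
    (hγ.mono (Icc_subset_Ico_right hv.2)).intervalIntegrable_of_Icc hv.1.le
  have hprimitive : HasDerivAt (fun u => ∫ w in a..u, γ w) (γ v) v :=
    intervalIntegral.integral_hasDerivAt_right hint
      ((hγ.mono Ioo_subset_Ico_self).stronglyMeasurableAtFilter isOpen_Ioo v hv)
      (hγ.continuousAt (Ico_mem_nhds hv.1 hv.2))
  refine hprimitive.fun_neg.exp.fun_neg.congr_deriv ?_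
  rw [hazardDensity]
  ring

theorem intervalIntegrable_hazardDensity (hab : a ≤ b) (hγ : ContinuousOn γ (Ico a b))
    (hγ0 : ∀ v ∈ Ico a b, 0 ≤ γ v) :
    IntervalIntegrable (hazardDensity γ a) volume a b := by
  refine intervalIntegrable_of_hasDerivAt_of_abs_le (C := 1) hab
    (fun v hv => hasDerivAt_neg_exp_neg_integral hγ hv)
    (fun v hv => mul_nonneg (hγ0 v (Ioo_subset_Ico_self hv)) (Real.exp_pos _).le) fun v hv => ?_
  have hint : 0 ≤ ∫ w in a..v, γ w :=
    intervalIntegral.integral_nonneg hv.1.le fun w hw => hγ0 w ⟨hw.1, hw.2.trans_lt hv.2⟩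
  rw [abs_neg, Real.abs_exp]
  exact Real.exp_le_one_iff.2 (neg_nonpos.2 hint)

end Hazard

section Branching

variable {p : ℕ → ℝ} {lam φ q : ℝ}

theorem ptilde_zero (p : ℕ → ℝ) : ptilde p 0 = p 0 := by
  rw [ptilde, tsum_eq_single 0 fun k hk => by rw [zero_pow hk, mul_zero], pow_zero, mul_one]

theorem lt_ptilde_of_mem_Ico (hp0 : 0 < p 0)
    (hφlo : ∀ z : ℝ, 0 < z → z < φ → z < ptilde p z) {z : ℝ} (hz : z ∈ Ico 0 φ) :
    z < ptilde p z := by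
  rcases hz.1.eq_or_lt with rfl | hz0
  · rwa [ptilde_zero]
  · exact hφlo z hz0 hz.2

theorem continuousOn_ptilde (hp : Summable p) : ContinuousOn (ptilde p) (Icc 0 1) := by
  refine continuousOn_tsum (fun k => by fun_prop) hp.norm fun k z hz => ?_
  rw [norm_mul, norm_pow, Real.norm_of_nonneg hz.1]
  exact mul_le_of_le_one_right (norm_nonneg _) (pow_le_one₀ hz.1 hz.2)

/-- The hazard rate `γ_q = q / ρ` for which `Φ_q` is the moment sequence of the hazard density when
`μ = 0`; it takes the junk value `0` at the fixed points of `ptilde p`. -/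
noncomputable def branchingHazard (lam : ℝ) (p : ℕ → ℝ) (q w : ℝ) : ℝ :=
  q / (lam * |ptilde p w - w|)

theorem branchingHazard_pos (hlam : 0 < lam) (hq : 0 < q) {w : ℝ} (hw : w < ptilde p w) :
    0 < branchingHazard lam p q w :=
  div_pos hq (mul_pos hlam (abs_pos.2 (sub_pos.2 hw).ne'))

theorem continuousOn_branchingHazard (hlam : lam ≠ 0) (hp : Summable p) (hφ1 : φ ≤ 1)
    (hne : ∀ z ∈ Ico 0 φ, ptilde p z ≠ z) :
    ContinuousOn (branchingHazard lam p q) (Ico 0 φ) := by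
  have hptilde : ContinuousOn (ptilde p) (Ico 0 φ) :=
    (continuousOn_ptilde hp).mono fun z hz => ⟨hz.1, hz.2.le.trans hφ1⟩
  exact continuousOn_const.div (continuousOn_const.mul (hptilde.sub continuousOn_id).abs)
    fun z hz => mul_ne_zero hlam (abs_ne_zero.2 (sub_ne_zero.2 (hne z hz)))

theorem Phi_eq_densityMoment (lam : ℝ) (p : ℕ → ℝ) (rneg : ℝ) (r : ℕ → ℝ) (φ θ q : ℝ) :
    Phi lam 0 p rneg r φ θ q
      = densityMoment (hazardDensity (branchingHazard lam p q) θ) φ := by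
  ext n
  simp only [Phi, densityMoment, hazardDensity, branchingHazard, zero_mul, add_zero,
    ← intervalIntegral.integral_const_mul]
  congr with v
  ring

theorem stmt19_general (hlam : 0 < lam) (hp : Summable p) (hp0 : 0 < p 0) (hφ0 : 0 < φ)
    (hφ1 : φ ≤ 1) (hφlo : ∀ z : ℝ, 0 < z → z < φ → z < ptilde p z) (hq : 0 < q) :
    let Φ := Phi lam 0 p 0 (fun _ => 0) φ 0 q
    (∀ a : ℕ, 0 < Φ a - Φ (a + 1)) ∧
      ∀ a x f : ℕ, (a : ℝ) + 1 - x + Φ (a + 1) / (Φ a - Φ (a + 1))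
        ≤ f + Φ (x + f) / (Φ a - Φ (a + 1)) := by
  intro Φ
  have hΦ : Φ = densityMoment (hazardDensity (branchingHazard lam p q) 0) φ :=
    Phi_eq_densityMoment ..
  have hlt (z : ℝ) (hz : z ∈ Ico 0 φ) : z < ptilde p z := lt_ptilde_of_mem_Ico hp0 hφlo hz
  have hγ (v : ℝ) (hv : v ∈ Ico 0 φ) : 0 < branchingHazard lam p q v :=
    branchingHazard_pos hlam hq (hlt v hv)
  have hg : IntervalIntegrable (hazardDensity (branchingHazard lam p q) 0) volume 0 φ :=
    intervalIntegrable_hazardDensity hφ0.le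
      (continuousOn_branchingHazard hlam.ne' hp hφ1 fun v hv => (hlt v hv).ne')
      fun v hv => (hγ v hv).le
  have hg_pos : ∀ v ∈ Ioo 0 φ, 0 < hazardDensity (branchingHazard lam p q) 0 v :=
    fun v hv => mul_pos (hγ v (Ioo_subset_Ico_self hv)) (Real.exp_pos _)
  have hpos (a : ℕ) : 0 < Φ a - Φ (a + 1) := hΦ ▸ densityMoment_sub_succ_pos hg hφ0 hφ1 hg_pos a
  have hanti : Antitone fun a => Φ a - Φ (a + 1) :=
    hΦ ▸ antitone_densityMoment_sub_succ hg hφ0.le hφ1 fun v hv => (hg_pos v hv).le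
  refine ⟨hpos, fun a x f => ?_⟩
  have hsecant := add_div_sub_succ_le_of_antitone_sub_succ hanti (hpos a) (x + f)
  push_cast at hsecant
  linarith

end Branching

/-- with `μ = 0` (so `θ_q = 0 < φ*`): `Φ_q(a) - Φ_q(a+1) > 0` for every `a`,
and for all `a, x ∈ ℕ` with `x ≤ a` and every `f ∈ ℕ` with `f > a + 1 - x`:
`f + Φ_q(x+f)/(Φ_q(a) - Φ_q(a+1)) ≥ a + 1 - x + Φ_q(a+1)/(Φ_q(a) - Φ_q(a+1))`. -/
theorem stmt19 (lam : ℝ) (p : ℕ → ℝ) (φ q : ℝ)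
    (hlam : 0 < lam)
    (hp : ∀ k, 0 ≤ p k) (hpsum : ∑' k, p k = 1) (hp0 : 0 < p 0) (hp1 : p 1 = 0)
    (hp0lt : p 0 < 1)
    (hφ0 : 0 < φ) (hφ1 : φ ≤ 1) (hφfix : ptilde p φ = φ)
    (hφlo : ∀ z : ℝ, 0 < z → z < φ → z < ptilde p z)
    (hφhi : ∀ z : ℝ, φ < z → z < 1 → ptilde p z < z)
    (hq : 0 < q) :
    (∀ a : ℕ, 0 < Phi lam 0 p 0 (fun _ => 0) φ 0 q a
        - Phi lam 0 p 0 (fun _ => 0) φ 0 q (a + 1)) ∧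
    (∀ a x : ℕ, x ≤ a → ∀ f : ℕ, a + 1 - x < f →
      (a : ℝ) + 1 - x + Phi lam 0 p 0 (fun _ => 0) φ 0 q (a + 1)
          / (Phi lam 0 p 0 (fun _ => 0) φ 0 q a
            - Phi lam 0 p 0 (fun _ => 0) φ 0 q (a + 1))
        ≤ (f : ℝ) + Phi lam 0 p 0 (fun _ => 0) φ 0 q (x + f)
          / (Phi lam 0 p 0 (fun _ => 0) φ 0 q a
            - Phi lam 0 p 0 (fun _ => 0) φ 0 q (a + 1))) := by
  have hp_summable : Summable p := by_contra fun hnot =>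
    zero_ne_one ((tsum_eq_zero_of_not_summable hnot).symm.trans hpsum)
  have h := stmt19_general hlam hp_summable hp0 hφ0 hφ1 hφlo hq
  exact ⟨h.1, fun a x _ f _ => h.2 a x f⟩
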